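/- arXiv:2007.10889 — 2 statements merged into one kernel-verified Lean document; each statement's English description precedes it below -/
import Mathlib

section
/- For every finite word α = a_0…a_{n−1} over A (possibly empty), every H ∈ V, and every finite set F ⊆ H, the generalized cylinders Z(α) and Z(α,H,F) are clopen subsets of the full blur shift Σ with the quotient topology. -/
open Set Filter Topology

namespace BlurPaper

/-- The extended alphabet `Ā = A ⊕ V`, where each blurred set `H ∈ V` is regarded
as a new symbol `H̃`. -/
abbrev Symb (A : Type*) (V : Set (Set A)) := A ⊕ {H : Set A // H ∈ V}

/-- `V` is a family of blurred sets: every member is infinite and two distinct members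
have finite intersection. -/
def IsBlurFamily {A : Type*} (V : Set (Set A)) : Prop :=
  (∀ H ∈ V, H.Infinite) ∧ ∀ G ∈ V, ∀ H ∈ V, G ≠ H → (G ∩ H).Finite

/-- The full blur shift `Σ`: sequences over `Ā` such that a blur symbol is followed
by the same blur symbol. -/
def FullBlur (A : Type*) (V : Set (Set A)) : Set (ℕ → Symb A V) :=
  {x | ∀ (i : ℕ) (H : {H : Set A // H ∈ V}), x i = Sum.inr H → x (i + 1) = Sum.inr H}

/-- Generalized cylinder `Z(α)`. -/
def Z (A : Type*) (V : Set (Set A)) (α : List A) : Set (FullBlur A V) :=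
  {x | ∀ i : Fin α.length, x.1 i = Sum.inl (α.get i)}

/-- Generalized cylinder `Z(α, H, F)`. -/
def ZH (A : Type*) (V : Set (Set A)) (α : List A) (H : {H : Set A // H ∈ V})
    (F : Set A) : Set (FullBlur A V) :=
  {x | (∀ i : Fin α.length, x.1 i = Sum.inl (α.get i)) ∧
    (x.1 α.length = Sum.inr H ∨ ∃ a ∈ H.1 \ F, x.1 α.length = Sum.inl a)}

/-- The collection of all generalized cylinders. -/
def Cylinders (A : Type*) (V : Set (Set A)) : Set (Set (FullBlur A V)) :=
  {U | ∃ α : List A, U = Z A V α} ∪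
  {U | ∃ (α : List A) (H : {H : Set A // H ∈ V}) (F : Set A),
    F ⊆ H.1 ∧ F.Finite ∧ U = ZH A V α H F}

/-- The topology on the full blur shift generated by the generalized cylinders. -/
def tau (A : Type*) (V : Set (Set A)) : TopologicalSpace (FullBlur A V) :=
  TopologicalSpace.generateFrom (Cylinders A V)

/-- The shift map on the full blur shift. -/
def shift (A : Type*) (V : Set (Set A)) : FullBlur A V → FullBlur A V :=
  fun x => ⟨fun i => x.1 (i + 1), fun i H h => x.2 (i + 1) H h⟩

/-- The shift map on `A^ℕ`. -/
def shiftSeq (A : Type*) : (ℕ → A) → ℕ → A := fun x i => x (i + 1)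

/-- The prodiscrete topology on `A^ℕ` (product of discrete topologies). -/
def prodDiscrete (A : Type*) : TopologicalSpace (ℕ → A) :=
  @Pi.topologicalSpace ℕ (fun _ => A) fun _ => ⊥

/-- A (classical) shift space over `A`: closed in the prodiscrete topology and
invariant under the shift map. -/
def IsShiftSpace {A : Type*} (Λ : Set (ℕ → A)) : Prop :=
  @IsClosed _ (prodDiscrete A) Λ ∧ ∀ x ∈ Λ, shiftSeq A x ∈ Λ

/-- `w ∈ B(Y)`: the finite word `w` appears as an initial word of some element of `Y`. -/
def InLang {A : Type*} (Y : Set (ℕ → A)) (w : List A) : Prop :=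
  ∃ x ∈ Y, ∀ i : Fin w.length, x i = w.get i

/-- The follower set `F_Y(w) = {a : w a ∈ B(Y)}`. -/
def Fol {A : Type*} (Y : Set (ℕ → A)) (w : List A) : Set A :=
  {a | InLang Y (w ++ [a])}

/-- The predecessor set `P_Y(a) = {b : b a ∈ B(Y)}`. -/
def Pred {A : Type*} (Y : Set (ℕ → A)) (a : A) : Set A :=
  {b | InLang Y [b, a]}

/-- `B₁(Y)`: the set of letters occurring in sequences of `Y`. -/
def letters {A : Type*} (Y : Set (ℕ → A)) : Set A :=
  {a | ∃ x ∈ Y, ∃ i, x i = a}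

/-- The canonical embedding `A^ℕ → Σ`. -/
def embed (A : Type*) (V : Set (Set A)) : (ℕ → A) → FullBlur A V :=
  fun x => ⟨fun i => Sum.inl (x i), fun _ _ h => absurd h (by simp)⟩

/-- The point `(a₀ … a_{n-1} H̃ H̃ H̃ …)` of the full blur shift. -/
def wordBlur {A : Type*} {V : Set (Set A)} (α : List A) (H : {H : Set A // H ∈ V}) :
    FullBlur A V :=
  ⟨fun i => if h : i < α.length then Sum.inl (α.get ⟨i, h⟩) else Sum.inr H, by
    intro i K hK
    by_cases h : i < α.length
    · simp only [dif_pos h] at hK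
      exact absurd hK (by simp)
    · simp only [dif_neg h] at hK
      simp only [dif_neg (by omega : ¬ i + 1 < α.length)]
      exact hK⟩

/-- The boundary `∂Y`: points `(a₀ … a_{n-1} H̃ H̃ …)` with `a₀ … a_{n-1} ∈ B(Y)` and
`F_Y(a₀ … a_{n-1}) ∩ H` infinite. -/
def boundary (A : Type*) (V : Set (Set A)) (Y : Set (ℕ → A)) : Set (FullBlur A V) :=
  {z | ∃ (α : List A) (H : {H : Set A // H ∈ V}),
    z = wordBlur α H ∧ InLang Y α ∧ (Fol Y α ∩ H.1).Infinite}

/-- The blur shift space `Σ_Y = Y ∪ ∂Y` of `Y` with resolution `V`. -/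
def SigmaOf (A : Type*) (V : Set (Set A)) (Y : Set (ℕ → A)) : Set (FullBlur A V) :=
  embed A V '' Y ∪ boundary A V Y

/-- The subspace topology inherited from the full blur shift. -/
def subTau (A : Type*) (V : Set (Set A)) (X : Set (FullBlur A V)) :
    TopologicalSpace X :=
  TopologicalSpace.induced Subtype.val (tau A V)

/-- `V_Λ`: the blurred sets that appear in `Σ_Λ`, i.e. those meeting `B₁(Λ)` in an
infinite set. -/
def VLam (A : Type*) (V : Set (Set A)) (Λ : Set (ℕ → A)) : Set (Set A) :=
  {H | H ∈ V ∧ (letters Λ ∩ H).Infinite}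


/-- The topology on `Ā`: singletons of `A` are open, and the basic neighborhoods of
`H̃` are the sets `(H ∖ F) ∪ {H̃}` with `F ⊆ H` finite. -/
def barTop (A : Type*) (V : Set (Set A)) : TopologicalSpace (Symb A V) :=
  TopologicalSpace.generateFrom
    ({U | ∃ a : A, U = {Sum.inl a}} ∪
      {U | ∃ (H : {H : Set A // H ∈ V}) (F : Set A), F ⊆ H.1 ∧ F.Finite ∧
        U = Sum.inl '' (H.1 \ F) ∪ {Sum.inr H}})

/-- The product topology on `Ā^ℕ`. -/
def prodBarTop (A : Type*) (V : Set (Set A)) : TopologicalSpace (ℕ → Symb A V) :=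
  @Pi.topologicalSpace ℕ (fun _ => Symb A V) fun _ => barTop A V

/-- The canonical projection `Ā^ℕ → Σ` onto canonical representatives of the
equivalence classes of `∼` (a sequence is replaced, from its first blur symbol on,
by that blur symbol repeated forever). -/
noncomputable def quotMap (A : Type*) (V : Set (Set A)) :
    (ℕ → Symb A V) → FullBlur A V := fun x => by
  classical
  exact if h : ∃ i, ∃ H : {H : Set A // H ∈ V}, x i = Sum.inr H then
    ⟨fun i => if i < Nat.find h then x i else x (Nat.find h), by
      intro i K hK
      by_cases hi : i < Nat.find h
      · simp only [if_pos hi] at hK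
        exact absurd ⟨K, hK⟩ (Nat.find_min h hi)
      · simp only [if_neg hi] at hK
        simp only [if_neg (by omega : ¬ i + 1 < Nat.find h)]
        exact hK⟩
  else ⟨x, fun i K hK => absurd ⟨i, K, hK⟩ h⟩

/-- The quotient topology on the full blur shift `Σ ≅ Ā^ℕ/∼`: the topology coinduced
from the product topology on `Ā^ℕ` along the canonical projection. -/
noncomputable def quotTop (A : Type*) (V : Set (Set A)) :
    TopologicalSpace (FullBlur A V) :=
  TopologicalSpace.coinduced (quotMap A V) (prodBarTop A V)

/-!
A sequence and its image under `quotMap` agree up to and including the first blur symbol, and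
whether a point lies in a generalized cylinder depends only on those coordinates. The preimage of
a cylinder in `Ā^ℕ` is therefore a finite intersection of coordinate conditions `x i ∈ {a}` and
`x n ∈ (H ∖ F) ∪ {H̃}`, so it suffices that these subsets of `Ā` are clopen. A subset of `Ā` is
open as soon as it contains all but finitely many letters of `G` for each blur symbol `G̃` in it;
the complement of `(H ∖ F) ∪ {H̃}` passes this test because `G ∩ H` is finite for `G ≠ H`.
-/

section

variable {A : Type*} {V : Set (Set A)}

local instance : TopologicalSpace (Symb A V) := barTop A V

-- Takes precedence over the subtype topology, which is in general strictly finer.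
noncomputable local instance : TopologicalSpace (FullBlur A V) := quotTop A V

/-- The set `(H ∖ F) ∪ {H̃}`, for finite `F` a basic neighbourhood of the blur symbol `H̃`, written
exactly as it occurs among the generators of `barTop`. -/
def blurNhd (H : {H : Set A // H ∈ V}) (F : Set A) : Set (Symb A V) :=
  Sum.inl '' (H.1 \ F) ∪ {Sum.inr H}

theorem inl_mem_blurNhd {H : {H : Set A // H ∈ V}} {F : Set A} {a : A} :
    Sum.inl a ∈ blurNhd H F ↔ a ∈ H.1 \ F := by
  simp [blurNhd]

theorem inr_mem_blurNhd {G H : {H : Set A // H ∈ V}} {F : Set A} :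
    Sum.inr G ∈ blurNhd H F ↔ G = H := by
  simp [blurNhd]

theorem isOpen_singleton_inl (a : A) : IsOpen {(Sum.inl a : Symb A V)} :=
  TopologicalSpace.isOpen_generateFrom_of_mem (Or.inl ⟨a, rfl⟩)

theorem isOpen_of_finite_diff_preimage_inl {S : Set (Symb A V)}
    (hS : ∀ G : {H : Set A // H ∈ V}, Sum.inr G ∈ S → (G.1 \ Sum.inl ⁻¹' S).Finite) :
    IsOpen S := by
  rw [isOpen_iff_forall_mem_open]
  rintro (a | G) hmem
  · exact ⟨{Sum.inl a}, singleton_subset_iff.2 hmem, isOpen_singleton_inl a, rfl⟩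
  · refine ⟨blurNhd G (G.1 \ Sum.inl ⁻¹' S), ?_,
      TopologicalSpace.isOpen_generateFrom_of_mem
        (Or.inr ⟨G, _, sdiff_subset, hS G hmem, rfl⟩), inr_mem_blurNhd.2 rfl⟩
    rintro (a | K) h
    · rw [inl_mem_blurNhd, sdiff_sdiff_right_self] at h
      exact h.2
    · rwa [inr_mem_blurNhd.1 h]

theorem isClopen_singleton_inl (a : A) : IsClopen {(Sum.inl a : Symb A V)} := by
  refine ⟨⟨isOpen_of_finite_diff_preimage_inl fun G _ => ?_⟩, isOpen_singleton_inl a⟩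
  refine (finite_singleton a).subset fun b hb => ?_
  simpa using hb.2

theorem isOpen_blurNhd (H : {H : Set A // H ∈ V}) {F : Set A} (hF : F.Finite) :
    IsOpen (blurNhd H F) := by
  refine isOpen_of_finite_diff_preimage_inl fun G hG => ?_
  obtain rfl := inr_mem_blurNhd.1 hG
  refine hF.subset fun a ⟨haG, ha⟩ => ?_
  by_contra haF
  exact ha (inl_mem_blurNhd.2 ⟨haG, haF⟩)

theorem isClosed_blurNhd {H : {H : Set A // H ∈ V}}
    (hH : ∀ G ∈ V, G ≠ H.1 → (G ∩ H.1).Finite) (F : Set A) : IsClosed (blurNhd H F) := by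
  refine ⟨isOpen_of_finite_diff_preimage_inl fun G hG => ?_⟩
  have hne : G.1 ≠ H.1 := fun h => hG (inr_mem_blurNhd.2 (Subtype.ext h))
  refine (hH G.1 G.2 hne).subset fun a ⟨haG, ha⟩ => ?_
  exact ⟨haG, (inl_mem_blurNhd.1 (not_not.1 ha)).1⟩

theorem quotMap_apply_of_isLeft {x : ℕ → Symb A V} {i : ℕ} (h : ∀ j < i, (x j).isLeft) :
    (quotMap A V x).1 i = x i := by
  classical
  unfold quotMap
  split_ifs with hx
  · obtain ⟨K, hK⟩ := Nat.find_spec hx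
    have hle : i ≤ Nat.find hx := by
      by_contra! hlt
      simpa only [hK, Sum.isLeft_inr, Bool.false_eq_true] using h _ hlt
    rcases hle.lt_or_eq with hlt | heq
    · exact if_pos hlt
    · simp only [← heq, lt_irrefl, if_false]
  · rfl

theorem apply_eq_inl_of_quotMap_apply_eq_inl {x : ℕ → Symb A V} {i : ℕ} {a : A}
    (h : (quotMap A V x).1 i = Sum.inl a) : x i = Sum.inl a := by
  classical
  unfold quotMap at h
  split_ifs at h with hx
  · obtain ⟨K, hK⟩ := Nat.find_spec hx
    by_cases hi : i < Nat.find hx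
    · simpa only [if_pos hi] using h
    · simp only [if_neg hi, hK, reduceCtorEq] at h
  · exact h

theorem quotMap_mem_Z {x : ℕ → Symb A V} {α : List A} :
    quotMap A V x ∈ Z A V α ↔ ∀ i : Fin α.length, x i = Sum.inl (α.get i) := by
  refine ⟨fun h i => apply_eq_inl_of_quotMap_apply_eq_inl (h i), fun h i => ?_⟩
  rw [quotMap_apply_of_isLeft fun j hj => by simp [h ⟨j, hj.trans i.2⟩], h i]

theorem mem_ZH {y : FullBlur A V} {α : List A} {H : {H : Set A // H ∈ V}} {F : Set A} :
    y ∈ ZH A V α H F ↔ y ∈ Z A V α ∧ y.1 α.length ∈ blurNhd H F := by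
  simp [ZH, Z, blurNhd, eq_comm]

theorem quotMap_mem_ZH {x : ℕ → Symb A V} {α : List A} {H : {H : Set A // H ∈ V}} {F : Set A} :
    quotMap A V x ∈ ZH A V α H F ↔ quotMap A V x ∈ Z A V α ∧ x α.length ∈ blurNhd H F := by
  refine mem_ZH.trans (and_congr_right fun h => ?_)
  have hx := quotMap_mem_Z.1 h
  rw [quotMap_apply_of_isLeft fun j hj => by simp [hx ⟨j, hj⟩]]

theorem isClopen_preimage_quotMap {S : Set (FullBlur A V)} :
    IsClopen (quotMap A V ⁻¹' S) ↔ IsClopen S :=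
  (and_congr isClosed_coinduced isOpen_coinduced).symm

theorem isClopen_Z (α : List A) : IsClopen (Z A V α) := by
  have hpre : quotMap A V ⁻¹' Z A V α =
      ⋂ i : Fin α.length, (fun x => x i) ⁻¹' {Sum.inl (α.get i)} := by
    ext x
    simp only [mem_preimage, quotMap_mem_Z, mem_iInter, mem_singleton_iff]
  rw [← isClopen_preimage_quotMap, hpre]
  exact isClopen_iInter_of_finite fun i =>
    (isClopen_singleton_inl _).preimage (continuous_apply _)

theorem isClopen_ZH (α : List A) {H : {H : Set A // H ∈ V}}
    (hH : ∀ G ∈ V, G ≠ H.1 → (G ∩ H.1).Finite) {F : Set A} (hF : F.Finite) :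
    IsClopen (ZH A V α H F) := by
  have hpre : quotMap A V ⁻¹' ZH A V α H F =
      quotMap A V ⁻¹' Z A V α ∩ (fun x => x α.length) ⁻¹' blurNhd H F :=
    ext fun _ => quotMap_mem_ZH
  have hblur : IsClopen (blurNhd H F) := ⟨isClosed_blurNhd hH F, isOpen_blurNhd H hF⟩
  rw [← isClopen_preimage_quotMap, hpre]
  exact (isClopen_preimage_quotMap.2 (isClopen_Z α)).inter
    (hblur.preimage (continuous_apply _))

end

theorem isClopen_cylinders_general {A : Type*} (V : Set (Set A)) (α : List A)
    (H : {H : Set A // H ∈ V}) (F : Set A) (hH : ∀ G ∈ V, G ≠ H.1 → (G ∩ H.1).Finite)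
    (hF : F.Finite) :
    @IsClopen _ (quotTop A V) (Z A V α) ∧ @IsClopen _ (quotTop A V) (ZH A V α H F) :=
  ⟨isClopen_Z α, isClopen_ZH α hH hF⟩

/-- Every generalized cylinder `Z(α)` and `Z(α,H,F)` (with `F ⊆ H`
finite) is clopen in the quotient topology on the full blur shift. -/
theorem isClopen_cylinders {A : Type*} (V : Set (Set A)) (hV : IsBlurFamily V)
    (α : List A) (H : {H : Set A // H ∈ V}) (F : Set A) (hFH : F ⊆ H.1)
    (hF : F.Finite) :
    @IsClopen _ (quotTop A V) (Z A V α) ∧ @IsClopen _ (quotTop A V) (ZH A V α H F) :=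
  isClopen_cylinders_general V α H F (fun G hG hne => hV.2 G hG H.1 H.2 hne) hF

end BlurPaper
end

section
/- Every blur shift space Σ_Λ, with the subspace topology inherited from the full blur shift Σ, is a Fréchet–Urysohn space: for every subset S ⊆ Σ_Λ, every point of the closure of S in Σ_Λ is the limit of a sequence of points of S. -/
open Set Filter Topology

namespace BlurPaper

/-!
Peeling off the point `αH̃H̃…` writes `Z(α, H, F)` as `{αH̃H̃…} ∪ ⋃_{a ∈ H ∖ F} Z(αa)`, from which
one reads off neighbourhood bases: the cylinders over the prefixes of `u` at a sequence `u` of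
letters, and the sets `Z(α, H, F)`, `F ⊆ H` finite, at `αH̃H̃…`. The former basis is countable.
At `αH̃H̃…` the topology need not be first countable, but if `αH̃H̃…` lies in `closure S ∖ S`, then
`S` meets `Z(αa)` for infinitely many `a ∈ H`, and any choice of points of `S` in
`Z(αa₀), Z(αa₁), …`, for distinct `aₖ ∈ H`, converges to `αH̃H̃…`, because a finite `F` contains
only finitely many `aₖ`.
-/

theorem hasBasis_nhds_generateFrom {X ι : Type*} {g : Set (Set X)} {x : X} {p : ι → Prop}
    {s : ι → Set X} (hs : ∀ i, p i → x ∈ s i ∧ s i ∈ g)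
    (hg : ∀ U ∈ g, x ∈ U → ∃ i, p i ∧ s i ⊆ U)
    (hdir : DirectedOn (s ⁻¹'o (· ≥ ·)) {i | p i}) (hne : {i | p i}.Nonempty) :
    (@nhds X (TopologicalSpace.generateFrom g) x).HasBasis p s := by
  have nhds_eq : @nhds X (TopologicalSpace.generateFrom g) x = ⨅ i ∈ {i | p i}, 𝓟 (s i) := by
    rw [TopologicalSpace.nhds_generateFrom]
    refine le_antisymm (le_iInf₂ fun i hi => iInf₂_le (s i) (hs i hi)) (le_iInf₂ fun U hU => ?_)
    obtain ⟨i, hi, hiU⟩ := hg U hU.2 hU.1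
    exact (iInf₂_le i hi).trans (principal_mono.2 hiU)
  rw [nhds_eq]
  exact hasBasis_biInf_principal hdir hne

section Cylinders

variable {A : Type*} {V : Set (Set A)} {α β : List A} {H : {H : Set A // H ∈ V}}
  {x : FullBlur A V}

theorem mem_Z_iff_getElem :
    x ∈ Z A V α ↔ ∀ (i : ℕ) (hi : i < α.length), x.1 i = Sum.inl α[i] :=
  Fin.forall_iff

theorem mem_Z_append_singleton {a : A} :
    x ∈ Z A V (α ++ [a]) ↔ x ∈ Z A V α ∧ x.1 α.length = Sum.inl a := by
  simp only [mem_Z_iff_getElem, List.length_append, List.length_singleton]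
  refine ⟨fun h => ⟨fun i hi => ?_, ?_⟩, fun ⟨hα, ha⟩ i hi => ?_⟩
  · simpa [List.getElem_append_left hi] using h i (by omega)
  · simpa using h α.length (by omega)
  · rcases Nat.lt_succ_iff_lt_or_eq.1 hi with hlt | rfl
    · simpa [List.getElem_append_left hlt] using hα i hlt
    · simpa using ha

theorem Z_subset_of_prefix (h : β <+: α) : Z A V α ⊆ Z A V β := by
  intro x hx
  rw [mem_Z_iff_getElem] at hx ⊢
  exact fun i hi => (hx i (hi.trans_le h.length_le)).trans (congrArg Sum.inl (h.getElem hi).symm)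

theorem eq_inr_of_le {m n : ℕ} (hm : x.1 m = Sum.inr H) (hmn : m ≤ n) : x.1 n = Sum.inr H :=
  Nat.le_induction hm (fun k _ => x.2 k H) n hmn

theorem wordBlur_apply_of_lt {i : ℕ} (hi : i < α.length) :
    (wordBlur α H).1 i = Sum.inl α[i] :=
  dif_pos hi

theorem wordBlur_apply_of_le {i : ℕ} (hi : α.length ≤ i) : (wordBlur α H).1 i = Sum.inr H :=
  dif_neg hi.not_gt

theorem eq_wordBlur_iff :
    x = wordBlur α H ↔ x ∈ Z A V α ∧ x.1 α.length = Sum.inr H := by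
  rw [mem_Z_iff_getElem]
  constructor
  · rintro rfl
    exact ⟨fun i hi => wordBlur_apply_of_lt hi, wordBlur_apply_of_le le_rfl⟩
  · rintro ⟨hα, hH⟩
    refine Subtype.ext (funext fun i => ?_)
    rcases lt_or_ge i α.length with hi | hi
    · rw [hα i hi, wordBlur_apply_of_lt hi]
    · rw [eq_inr_of_le hH hi, wordBlur_apply_of_le hi]

theorem wordBlur_mem_Z_iff : wordBlur α H ∈ Z A V β ↔ β <+: α := by
  refine ⟨fun h => ?_, fun h => Z_subset_of_prefix h (eq_wordBlur_iff.1 rfl).1⟩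
  rw [mem_Z_iff_getElem] at h
  have length_le : β.length ≤ α.length := by
    by_contra! hlt
    simpa [wordBlur_apply_of_le le_rfl] using h α.length hlt
  refine List.prefix_iff_getElem.2 ⟨length_le, fun i hi => ?_⟩
  have hi_eq := h i hi
  rw [wordBlur_apply_of_lt (hi.trans_le length_le)] at hi_eq
  exact (Sum.inl_injective hi_eq).symm

theorem wordBlur_inj {G : {H : Set A // H ∈ V}} :
    wordBlur α H = wordBlur β G ↔ α = β ∧ H = G := by
  refine ⟨fun h => ?_, fun ⟨hα, hH⟩ => hα ▸ hH ▸ rfl⟩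
  have hβα : β <+: α := wordBlur_mem_Z_iff.1 (eq_wordBlur_iff.1 h).1
  have hαβ : α <+: β := wordBlur_mem_Z_iff.1 (eq_wordBlur_iff.1 h.symm).1
  obtain rfl : α = β := hαβ.eq_of_length_le hβα.length_le
  have blur_eq := (eq_wordBlur_iff.1 h).2
  rw [wordBlur_apply_of_le le_rfl] at blur_eq
  exact ⟨rfl, Sum.inr_injective blur_eq⟩

theorem embed_ne_wordBlur (u : ℕ → A) : embed A V u ≠ wordBlur α H :=
  fun h => Sum.inl_ne_inr (eq_wordBlur_iff.1 h).2

theorem exists_eq_embed_or_eq_wordBlur (x : FullBlur A V) :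
    (∃ u, x = embed A V u) ∨ ∃ α H, x = wordBlur α H := by
  refine or_iff_not_imp_right.2 fun hx => ?_
  have exists_word : ∀ n, ∃ α : List A, α.length = n ∧ x ∈ Z A V α := by
    intro n
    induction n with
    | zero => exact ⟨[], rfl, fun i => i.elim0⟩
    | succ n ih =>
      obtain ⟨α, rfl, hα⟩ := ih
      cases hn : x.1 α.length with
      | inl a => exact ⟨α ++ [a], by simp, mem_Z_append_singleton.2 ⟨hα, hn⟩⟩
      | inr H => exact absurd ⟨α, H, eq_wordBlur_iff.2 ⟨hα, hn⟩⟩ hx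
  have exists_letter : ∀ i, ∃ a, x.1 i = Sum.inl a := by
    intro i
    obtain ⟨α, hlen, hα⟩ := exists_word (i + 1)
    exact ⟨_, mem_Z_iff_getElem.1 hα i (by omega)⟩
  choose u hu using exists_letter
  exact ⟨u, Subtype.ext (funext hu)⟩

theorem ZH_eq_insert_iUnion (α : List A) (H : {H : Set A // H ∈ V}) (F : Set A) :
    ZH A V α H F = insert (wordBlur α H) (⋃ a ∈ H.1 \ F, Z A V (α ++ [a])) := by
  ext x
  simp only [mem_insert_iff, mem_iUnion₂, eq_wordBlur_iff, mem_Z_append_singleton, exists_prop]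
  constructor
  · rintro ⟨hα, hH | ⟨a, ha, hxa⟩⟩
    exacts [Or.inl ⟨hα, hH⟩, Or.inr ⟨a, ha, hα, hxa⟩]
  · rintro (⟨hα, hH⟩ | ⟨a, ha, hα, hxa⟩)
    exacts [⟨hα, Or.inl hH⟩, ⟨hα, Or.inr ⟨a, ha, hxa⟩⟩]

theorem wordBlur_mem_ZH (F : Set A) : wordBlur α H ∈ ZH A V α H F :=
  ZH_eq_insert_iUnion α H F ▸ mem_insert _ _

theorem Z_append_singleton_subset_ZH {F : Set A} {a : A} (ha : a ∈ H.1 \ F) :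
    Z A V (α ++ [a]) ⊆ ZH A V α H F :=
  ZH_eq_insert_iUnion α H F ▸
    (subset_biUnion_of_mem (u := fun a => Z A V (α ++ [a])) ha).trans (subset_insert _ _)

theorem ZH_subset_Z (F : Set A) : ZH A V α H F ⊆ Z A V α :=
  fun _ hx => hx.1

theorem ZH_antitone (α : List A) (H : {H : Set A // H ∈ V}) : Antitone (ZH A V α H) :=
  fun _ _ hF _ hx => ⟨hx.1, hx.2.imp_right fun ⟨a, ha, hxa⟩ =>
    ⟨a, sdiff_subset_sdiff_right hF ha, hxa⟩⟩

theorem exists_Z_subset_of_embed_mem {u : ℕ → A} {U : Set (FullBlur A V)}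
    (hU : U ∈ Cylinders A V) (hu : embed A V u ∈ U) :
    ∃ α, embed A V u ∈ Z A V α ∧ Z A V α ⊆ U := by
  rcases hU with ⟨α, rfl⟩ | ⟨α, H, F, -, -, rfl⟩
  · exact ⟨α, hu, Subset.rfl⟩
  · rw [ZH_eq_insert_iUnion] at hu
    obtain ⟨a, ha, hua⟩ := mem_iUnion₂.1 (hu.resolve_left (embed_ne_wordBlur u))
    exact ⟨α ++ [a], hua, Z_append_singleton_subset_ZH ha⟩

theorem exists_ZH_subset_of_wordBlur_mem {U : Set (FullBlur A V)}
    (hU : U ∈ Cylinders A V) (hαH : wordBlur α H ∈ U) :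
    ∃ F, (F ⊆ H.1 ∧ F.Finite) ∧ ZH A V α H F ⊆ U := by
  rcases hU with ⟨β, rfl⟩ | ⟨β, G, F, hFG, hF, rfl⟩
  · exact ⟨∅, ⟨empty_subset _, finite_empty⟩,
      (ZH_subset_Z ∅).trans (Z_subset_of_prefix (wordBlur_mem_Z_iff.1 hαH))⟩
  · rw [ZH_eq_insert_iUnion] at hαH
    rcases hαH with h_eq | h_mem
    · obtain ⟨rfl, rfl⟩ := wordBlur_inj.1 h_eq
      exact ⟨F, ⟨hFG, hF⟩, Subset.rfl⟩
    · obtain ⟨a, ha, hαa⟩ := mem_iUnion₂.1 h_mem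
      exact ⟨∅, ⟨empty_subset _, finite_empty⟩, (ZH_subset_Z ∅).trans
        ((Z_subset_of_prefix (wordBlur_mem_Z_iff.1 hαa)).trans (Z_append_singleton_subset_ZH ha))⟩

theorem embed_mem_Z_iff {u : ℕ → A} :
    embed A V u ∈ Z A V α ↔ α = (List.range α.length).map u := by
  rw [mem_Z_iff_getElem, List.ext_getElem_iff]
  simp [embed, eq_comm]

end Cylinders

section Topology

attribute [local instance] tau

variable {A : Type*} {V : Set (Set A)} {α : List A} {H : {H : Set A // H ∈ V}}

theorem hasBasis_nhds_embed (u : ℕ → A) :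
    (𝓝 (embed A V u)).HasBasis (fun _ => True) fun n => Z A V ((List.range n).map u) := by
  have antitone : Antitone fun n => Z A V ((List.range n).map u) := fun m n hmn =>
    Z_subset_of_prefix ((List.prefix_iff_eq_take.2 (by simp [List.take_range, hmn])).map u)
  refine hasBasis_nhds_generateFrom (fun n _ => ⟨embed_mem_Z_iff.2 (by simp), Or.inl ⟨_, rfl⟩⟩)
    (fun U hU hu => ?_) (fun m _ n _ => ?_) ⟨0, trivial⟩
  · obtain ⟨α, huα, hαU⟩ := exists_Z_subset_of_embed_mem hU hu
    exact ⟨α.length, trivial, embed_mem_Z_iff.1 huα ▸ hαU⟩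
  · exact ⟨max m n, trivial, antitone (le_max_left m n), antitone (le_max_right m n)⟩

theorem hasBasis_nhds_wordBlur (α : List A) (H : {H : Set A // H ∈ V}) :
    (𝓝 (wordBlur α H)).HasBasis (fun F => F ⊆ H.1 ∧ F.Finite) (ZH A V α H) := by
  refine hasBasis_nhds_generateFrom
    (fun F hF => ⟨wordBlur_mem_ZH F, Or.inr ⟨α, H, F, hF.1, hF.2, rfl⟩⟩)
    (fun U hU => exists_ZH_subset_of_wordBlur_mem hU) (fun F hF G hG => ?_)
    ⟨∅, empty_subset _, finite_empty⟩
  exact ⟨F ∪ G, ⟨union_subset hF.1 hG.1, hF.2.union hG.2⟩,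
    ZH_antitone α H subset_union_left, ZH_antitone α H subset_union_right⟩

theorem tendsto_nhds_wordBlur {ι : Type*} {l : Filter ι} {a : ι → A} {y : ι → FullBlur A V}
    (ha : Tendsto a l cofinite) (haH : ∀ᶠ i in l, a i ∈ H.1)
    (hy : ∀ᶠ i in l, y i ∈ Z A V (α ++ [a i])) : Tendsto y l (𝓝 (wordBlur α H)) := by
  refine (hasBasis_nhds_wordBlur α H).tendsto_right_iff.2 fun F hF => ?_
  filter_upwards [ha hF.2.compl_mem_cofinite, haH, hy] with i hiF hiH hyi
  exact Z_append_singleton_subset_ZH ⟨hiH, hiF⟩ hyi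

theorem infinite_setOf_Z_inter_nonempty {S : Set (FullBlur A V)}
    (hS : wordBlur α H ∈ closure S) (hnot_mem : wordBlur α H ∉ S) :
    {a ∈ H.1 | (Z A V (α ++ [a]) ∩ S).Nonempty}.Infinite := by
  intro hfin
  obtain ⟨y, hy, hyS⟩ := (mem_closure_iff_nhds_basis' (hasBasis_nhds_wordBlur α H)).1 hS _
    ⟨sep_subset _ _, hfin⟩
  rw [ZH_eq_insert_iUnion] at hy
  rcases hy with rfl | hy
  · exact hnot_mem hyS
  · obtain ⟨a, ⟨haH, ha⟩, hya⟩ := mem_iUnion₂.1 hy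
    exact ha ⟨haH, y, hya, hyS⟩

theorem embed_mem_seqClosure {u : ℕ → A} {S : Set (FullBlur A V)}
    (hS : embed A V u ∈ closure S) : embed A V u ∈ seqClosure S := by
  have := (hasBasis_nhds_embed (V := V) u).isCountablyGenerated
  obtain ⟨y, hy, hyS⟩ := exists_seq_forall_of_frequently (mem_closure_iff_frequently.1 hS)
  exact ⟨y, hyS, hy⟩

theorem wordBlur_mem_seqClosure {S : Set (FullBlur A V)} (hS : wordBlur α H ∈ closure S) :
    wordBlur α H ∈ seqClosure S := by
  by_cases hmem : wordBlur α H ∈ S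
  · exact subset_seqClosure hmem
  let a := (infinite_setOf_Z_inter_nonempty hS hmem).natEmbedding
  have a_tendsto : Tendsto (fun k => (a k : A)) atTop cofinite :=
    Nat.cofinite_eq_atTop ▸ (Subtype.val_injective.comp a.injective).tendsto_cofinite
  choose y hyZ hyS using fun k => (a k).2.2
  exact ⟨y, hyS, tendsto_nhds_wordBlur a_tendsto (.of_forall fun k => (a k).2.1) (.of_forall hyZ)⟩

theorem frechetUrysohnSpace_fullBlur (V : Set (Set A)) : FrechetUrysohnSpace (FullBlur A V) where
  closure_subset_seqClosure S x hx := by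
    rcases exists_eq_embed_or_eq_wordBlur x with ⟨u, rfl⟩ | ⟨α, H, rfl⟩
    exacts [embed_mem_seqClosure hx, wordBlur_mem_seqClosure hx]

end Topology

theorem frechetUrysohn_sigmaOf_general {A : Type*} (V : Set (Set A)) (X : Set (FullBlur A V)) :
    @FrechetUrysohnSpace X (subTau A V X) := by
  let := tau A V
  have := frechetUrysohnSpace_fullBlur V
  exact IsInducing.subtypeVal.frechetUrysohnSpace

/-- Every blur shift space `Σ_Λ`, with the subspace topology
inherited from the full blur shift, is a Fréchet–Urysohn space. -/
theorem frechetUrysohn_sigmaOf {A : Type*} (V : Set (Set A)) (hV : IsBlurFamily V)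
    (Λ : Set (ℕ → A)) (hΛ : IsShiftSpace Λ) :
    @FrechetUrysohnSpace (SigmaOf A V Λ) (subTau A V (SigmaOf A V Λ)) :=
  frechetUrysohn_sigmaOf_general V (SigmaOf A V Λ)

end BlurPaper
end
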